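/- Let n ≥ 4. For every shift vector s : E(K_n) → ℝ, the shifted-interval MST distribution M_s on spanning trees of K_n is not uniform: there exist spanning trees T, T' of K_n with P_{M_s}(T) ≠ P_{M_s}(T'). -/

import Mathlib

open MeasureTheory SimpleGraph
open scoped Classical

noncomputable section

namespace RST

variable {V : Type*}

/-- The graph on `V` whose edge set is the finset `T`. -/
def spanGraph (T : Finset (Sym2 V)) : SimpleGraph V :=
  SimpleGraph.fromEdgeSet ↑T

/-- `T` is (the edge set of) a spanning tree of `G`. -/
def IsSpanningTree (G : SimpleGraph V) (T : Finset (Sym2 V)) : Prop :=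
  ↑T ⊆ G.edgeSet ∧ (spanGraph T).Connected ∧ (spanGraph T).IsAcyclic

/-- Total weight `∑_{e ∈ T} w e` of the tree `T`. -/
def treeWeight (G : SimpleGraph V) [Fintype V] (w : G.edgeSet → ℝ) (T : Finset (Sym2 V)) : ℝ :=
  ∑ e : G.edgeSet, if (e : Sym2 V) ∈ T then w e else 0

/-- The event that `T` is the unique minimum-weight spanning tree of `G`. -/
def mstEvent (G : SimpleGraph V) [Fintype V] (T : Finset (Sym2 V)) : Set (G.edgeSet → ℝ) :=
  {w | IsSpanningTree G T ∧ ∀ T' : Finset (Sym2 V), IsSpanningTree G T' → T' ≠ T →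
    treeWeight G w T < treeWeight G w T'}

/-- Shifted-interval product measure: each edge `e` independently gets a weight drawn
uniformly from `[s e, s e + 1]`. -/
def shiftMeasure (G : SimpleGraph V) [Fintype V] (s : G.edgeSet → ℝ) :
    Measure (G.edgeSet → ℝ) :=
  Measure.pi fun e => (volume : Measure ℝ).restrict (Set.Icc (s e) (s e + 1))

/-- `P_{M_s}(T)`: the probability under the shifted-interval MST distribution `M_s`
that `T` is the (unique) minimum-weight spanning tree. -/
def shiftedMstProb (G : SimpleGraph V) [Fintype V] (s : G.edgeSet → ℝ)
    (T : Finset (Sym2 V)) : ℝ :=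
  (shiftMeasure G s (mstEvent G T)).toReal

/-! If `M_s` is uniform, then every spanning tree has positive probability. The comparisons of edge
weights forced by minimality of stars and brooms then show that any two of the weight intervals
overlap.

Now take four vertices `a`, `b`, `c`, `d` with `s (bc) ≤ s (bd)`, exchanging `c` and `d` if
necessary. Compare the star with centre `c` with the broom in which the leaf `b` hangs from `d`
instead of `c`. Where the broom is minimal, `w (bd) < w (bc)`, so swapping these two weights stays
in the support box. The swap preserves volume and maps the event of the broom into that of the
star. The image misses all weights with `w (ba) < w (dc)`, since minimality of the broom forces
`w (dc) < w (ba)`. By the overlap of the intervals, the event of the star contains a non-empty open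
set of such weights, so the star is strictly more likely than the broom.
-/

section SpanningTree

variable {G : SimpleGraph V} {T : Finset (Sym2 V)}

lemma spanGraph_adj {a b : V} : (spanGraph T).Adj a b ↔ s(a, b) ∈ T ∧ a ≠ b := by
  simp [spanGraph]

lemma spanGraph_edgeFinset (H : SimpleGraph V) [Fintype H.edgeSet] :
    spanGraph H.edgeFinset = H := by
  simp [spanGraph]

lemma edgeSet_spanGraph (hT : ↑T ⊆ G.edgeSet) : (spanGraph T).edgeSet = ↑T := by
  rw [spanGraph, edgeSet_fromEdgeSet, sdiff_eq_left]
  exact Set.disjoint_left.2 fun e he => G.not_isDiag_of_mem_edgeSet (hT he)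

lemma isSpanningTree_edgeFinset {H : SimpleGraph V} [Fintype H.edgeSet] (hH : H.IsTree)
    (hle : H ≤ G) : IsSpanningTree G H.edgeFinset := by
  refine ⟨?_, ?_⟩
  · rwa [coe_edgeFinset, edgeSet_subset_edgeSet]
  · rw [spanGraph_edgeFinset]
    exact ⟨hH.connected, hH.isAcyclic⟩

variable [Finite V]

lemma isSpanningTree_iff_connected_and_card :
    IsSpanningTree G T ↔ ↑T ⊆ G.edgeSet ∧ (spanGraph T).Connected ∧ T.card + 1 = Nat.card V := by
  refine and_congr_right fun hT => ?_
  rw [← isTree_iff, isTree_iff_connected_and_card, edgeSet_spanGraph hT]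
  simp

lemma IsSpanningTree.insert_erase (hT : IsSpanningTree G T) {u v : V} {f : Sym2 V}
    (he : s(u, v) ∈ T) (hfG : f ∈ G.edgeSet) (hf : f ∉ T)
    (huv : (spanGraph (insert f (T.erase s(u, v)))).Reachable u v) :
    IsSpanningTree G (insert f (T.erase s(u, v))) := by
  rw [isSpanningTree_iff_connected_and_card] at hT ⊢
  obtain ⟨hTG, hconn, hcard⟩ := hT
  have reachable_of_adj {a b : V} (hab : (spanGraph T).Adj a b) :
      (spanGraph (insert f (T.erase s(u, v)))).Reachable a b := by
    by_cases h : s(a, b) = s(u, v)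
    · obtain ⟨rfl, rfl⟩ | ⟨rfl, rfl⟩ := Sym2.eq_iff.1 h
      exacts [huv, huv.symm]
    · rw [spanGraph_adj] at hab
      refine Adj.reachable (spanGraph_adj.2 ⟨?_, hab.2⟩)
      simp [h, hab.1]
  refine ⟨?_, ?_, ?_⟩
  · rw [Finset.coe_insert, Set.insert_subset_iff]
    exact ⟨hfG, (Finset.coe_subset.2 (T.erase_subset _)).trans hTG⟩
  · have := hconn.nonempty
    refine ⟨fun a b => ?_⟩
    obtain ⟨p⟩ := hconn a b
    induction p with
    | nil => rfl
    | cons hab _ ih => exact (reachable_of_adj hab).trans ih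
  · rw [Finset.card_insert_of_notMem (fun h => hf (Finset.mem_of_mem_erase h)),
      Finset.card_erase_add_one he, hcard]

lemma IsSpanningTree.exists_insert_erase (hT : IsSpanningTree G T) {x c : V} (hxc : G.Adj x c)
    (hx : s(x, c) ∉ T) :
    ∃ y ≠ c, s(x, y) ∈ T ∧ IsSpanningTree G (insert s(x, c) (T.erase s(x, y))) := by
  obtain ⟨p, hp⟩ := (hT.2.1 x c).exists_isPath
  cases p with
  | nil => exact absurd rfl hxc.ne
  | @cons _ y _ hxy q =>
    rw [Walk.cons_isPath_iff] at hp
    have hmem : s(x, y) ∈ T := (spanGraph_adj.1 hxy).1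
    have hyc : y ≠ c := by
      rintro rfl
      exact hx hmem
    refine ⟨y, hyc, hmem, hT.insert_erase hmem hxc hx ?_⟩
    set H := spanGraph (insert s(x, c) (T.erase s(x, y)))
    have hxc' : H.Adj x c := by grind [spanGraph_adj, hxc.ne]
    have hyc' : H.Reachable y c := by
      refine ⟨q.transfer H fun e he => ?_⟩
      induction e with | _ u v
      have huv := spanGraph_adj.1 (q.adj_of_mem_edges he)
      have hux := ne_of_mem_of_not_mem (q.fst_mem_support_of_mem_edges he) hp.2
      have hvx := ne_of_mem_of_not_mem (q.snd_mem_support_of_mem_edges he) hp.2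
      rw [mem_edgeSet]
      grind [spanGraph_adj]
    exact hxc'.reachable.trans hyc'.symm

end SpanningTree

section Weight

variable [Fintype V] {G : SimpleGraph V} {T : Finset (Sym2 V)} {w : G.edgeSet → ℝ}

lemma treeWeight_insert {f : G.edgeSet} (hf : (f : Sym2 V) ∉ T) :
    treeWeight G w (insert ↑f T) = w f + treeWeight G w T := by
  have split_ite (e : G.edgeSet) : (if (e : Sym2 V) ∈ insert ↑f T then w e else 0) =
      (if e = f then w e else 0) + if (e : Sym2 V) ∈ T then w e else 0 := by
    by_cases h : e = f
    · simp [h, hf]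
    · simp [h, Subtype.ext_iff.not.1 h]
  simp only [treeWeight, split_ite, Finset.sum_add_distrib, Finset.sum_ite_eq', Finset.mem_univ,
    if_true]

lemma treeWeight_insert_erase {e f : G.edgeSet} (he : (e : Sym2 V) ∈ T) (hf : (f : Sym2 V) ∉ T) :
    w e + treeWeight G w (insert ↑f (T.erase e)) = w f + treeWeight G w T := by
  rw [treeWeight_insert fun h => hf (Finset.mem_of_mem_erase h), add_left_comm,
    ← treeWeight_insert (T.notMem_erase _), Finset.insert_erase he]

/-- `treeWeight` as a linear functional of the edge weights, so that the ties between two trees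
form a subspace. -/
def treeWeightLinear (G : SimpleGraph V) (T : Finset (Sym2 V)) : (G.edgeSet → ℝ) →ₗ[ℝ] ℝ where
  toFun w := treeWeight G w T
  map_add' w w' := by
    simp only [treeWeight, ← Finset.sum_add_distrib, Pi.add_apply]
    exact Finset.sum_congr rfl fun e _ => by split_ifs <;> simp
  map_smul' r w := by simp [treeWeight, Finset.mul_sum]

lemma treeWeightLinear_single (e : G.edgeSet) :
    treeWeightLinear G T (Pi.single e 1) = if (e : Sym2 V) ∈ T then 1 else 0 := by
  change ∑ f : G.edgeSet, (if (f : Sym2 V) ∈ T then Pi.single e (1 : ℝ) f else 0) = _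
  rw [Finset.sum_eq_single_of_mem e (Finset.mem_univ e) fun f _ hf => by simp [hf]]
  simp

lemma continuous_treeWeight : Continuous fun w => treeWeight G w T :=
  (treeWeightLinear G T).continuous_of_finiteDimensional

lemma isOpen_mstEvent : IsOpen (mstEvent G T) := by
  simp only [mstEvent, Set.ofPred_and, Set.ofPred_forall]
  refine isOpen_const.inter (isOpen_iInter_of_finite fun T' => isOpen_iInter_of_finite fun _ =>
    isOpen_iInter_of_finite fun _ => isOpen_lt continuous_treeWeight continuous_treeWeight)

lemma lt_of_mem_mstEvent (hw : w ∈ mstEvent G T) {u v : V} (huv : G.Adj u v) {f : G.edgeSet}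
    (he : s(u, v) ∈ T) (hf : (f : Sym2 V) ∉ T)
    (hreach : (spanGraph (insert ↑f (T.erase s(u, v)))).Reachable u v) :
    w ⟨s(u, v), huv⟩ < w f := by
  have hne : insert ↑f (T.erase s(u, v)) ≠ T :=
    fun h => hf (h ▸ Finset.mem_insert_self _ _)
  have hlt := hw.2 _ (hw.1.insert_erase he f.2 hf hreach) hne
  have hsum := treeWeight_insert_erase (w := w) (e := ⟨s(u, v), huv⟩) he hf
  linarith

lemma mem_mstEvent_of_forall_exists_lt (hT : IsSpanningTree G T)
    (h : ∀ T', IsSpanningTree G T' → T' ≠ T →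
      ∃ T'', IsSpanningTree G T'' ∧ treeWeight G w T'' < treeWeight G w T') :
    w ∈ mstEvent G T := by
  have eq_of_isMin {T₀} (hT₀ : IsSpanningTree G T₀)
      (hmin : ∀ T', IsSpanningTree G T' → treeWeight G w T₀ ≤ treeWeight G w T') : T₀ = T := by
    by_contra hne
    obtain ⟨T', hT', hlt⟩ := h T₀ hT₀ hne
    exact (hmin T' hT').not_gt hlt
  obtain ⟨T₀, hT₀, hmin⟩ := Set.exists_min_image {T' | IsSpanningTree G T'} (treeWeight G w)
    (Set.toFinite _) ⟨T, hT⟩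
  obtain rfl := eq_of_isMin hT₀ hmin
  refine ⟨hT, fun T' hT' hne => lt_of_not_ge fun hle => hne ?_⟩
  exact eq_of_isMin hT' fun T'' hT'' => hle.trans (hmin T'' hT'')

lemma exists_mem_mstEvent (hG : G.Connected)
    (hw : Set.InjOn (treeWeight G w) {T | IsSpanningTree G T}) : ∃ T, w ∈ mstEvent G T := by
  obtain ⟨H, hle, hH⟩ := hG.exists_isTree_le
  obtain ⟨T, hT, hmin⟩ := Set.exists_min_image {T | IsSpanningTree G T} (treeWeight G w)
    (Set.toFinite _) ⟨H.edgeFinset, isSpanningTree_edgeFinset hH hle⟩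
  exact ⟨T, hT, fun T' hT' hne => (hmin T' hT').lt_of_ne fun h => hne (hw hT' hT h.symm)⟩

end Weight

section ShiftMeasure

variable {ι : Type*}

lemma comp_swap_mem_Icc [DecidableEq ι] {s w : ι → ℝ} {e f : ι} (hs : s e ≤ s f)
    (hw : w ∈ Set.Icc s (s + 1)) (hwef : w f ≤ w e) : w ∘ Equiv.swap e f ∈ Set.Icc s (s + 1) := by
  simp only [Set.mem_Icc, Pi.le_def, Pi.add_apply, Pi.one_apply, Function.comp_apply,
    Equiv.swap_apply_def, ← forall_and] at hw ⊢
  intro x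
  have hx := hw x
  have he := hw e
  have hf := hw f
  split_ifs with h h
  · subst h; constructor <;> linarith
  · subst h; constructor <;> linarith
  · exact hx

lemma exists_mem_pi_Ioo_of_overlap [Finite ι] {s : ι → ℝ} (hs : ∀ e f, s e < s f + 1) (r : ι → ℝ) :
    ∃ w ∈ Set.univ.pi fun e => Set.Ioo (s e) (s e + 1), ∀ e f, r e < r f → w e < w f := by
  cases isEmpty_or_nonempty ι
  · exact ⟨0, fun e => isEmptyElim e, fun e => isEmptyElim e⟩
  obtain ⟨emax, hmax⟩ := Finite.exists_max s
  obtain ⟨emin, hmin⟩ := Finite.exists_min s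
  have hlen : 0 < s emin + 1 - s emax := sub_pos.2 (hs emax emin)
  -- The sigmoid squeezes the values of `r` into the common interval `(s emax, s emin + 1)`.
  refine ⟨fun e => s emax + Real.sigmoid (r e) * (s emin + 1 - s emax), fun e _ => ⟨?_, ?_⟩,
    fun e f hef => ?_⟩
  · have := mul_pos (Real.sigmoid_pos (r e)) hlen
    linarith [hmax e]
  · have := mul_lt_of_lt_one_left hlen (Real.sigmoid_lt_one (r e))
    linarith [hmin e]
  · have := mul_lt_mul_of_pos_right (Real.sigmoid_strictMono hef) hlen
    linarith

lemma volume_preimage_comp_perm [Fintype ι] (σ : Equiv.Perm ι) (A : Set (ι → ℝ)) :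
    volume ((fun w => w ∘ σ) ⁻¹' A) = volume A :=
  (volume_preserving_arrowCongr' σ.symm (.refl ℝ) (.id _)).measure_preimage_equiv A

variable [Fintype V] (G : SimpleGraph V) (s : G.edgeSet → ℝ)

lemma shiftMeasure_eq_restrict :
    shiftMeasure G s = volume.restrict (Set.Icc s (s + 1)) := by
  rw [shiftMeasure, ← Measure.restrict_pi_pi, Set.pi_univ_Icc]
  rfl

instance : IsProbabilityMeasure (shiftMeasure G s) := by
  have (e : G.edgeSet) :
      IsProbabilityMeasure ((volume : Measure ℝ).restrict (Set.Icc (s e) (s e + 1))) :=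
    ⟨by simp⟩
  unfold shiftMeasure
  infer_instance

variable {G s}

lemma exists_mem_Icc_of_shiftMeasure_ne_zero {A : Set (G.edgeSet → ℝ)}
    (hA : shiftMeasure G s A ≠ 0) : ∃ w ∈ A, w ∈ Set.Icc s (s + 1) := by
  rw [shiftMeasure_eq_restrict, Measure.restrict_apply' measurableSet_Icc] at hA
  exact nonempty_of_measure_ne_zero hA

lemma ae_treeWeight_ne {T T' : Finset (Sym2 V)} (hT : ↑T ⊆ G.edgeSet) (hT' : ↑T' ⊆ G.edgeSet)
    (hne : T ≠ T') : ∀ᵐ w ∂shiftMeasure G s, treeWeight G w T ≠ treeWeight G w T' := by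
  have hlin : treeWeightLinear G T ≠ treeWeightLinear G T' := by
    refine fun h => hne (Finset.ext fun e => ?_)
    have mem_iff (e : G.edgeSet) : (e : Sym2 V) ∈ T ↔ (e : Sym2 V) ∈ T' := by
      have := DFunLike.congr_fun h (Pi.single e 1)
      rw [treeWeightLinear_single, treeWeightLinear_single] at this
      split_ifs at this <;> simp_all
    exact ⟨fun he => (mem_iff ⟨e, hT he⟩).1 he, fun he => (mem_iff ⟨e, hT' he⟩).2 he⟩
  have hnull : volume {w | treeWeight G w T = treeWeight G w T'} = 0 :=
    Measure.addHaar_submodule volume (LinearMap.eqLocus _ _) (mt LinearMap.eqLocus_eq_top.1 hlin)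
  rw [shiftMeasure_eq_restrict]
  exact ae_restrict_of_ae (by simpa [ae_iff] using hnull)

lemma ae_injOn_treeWeight :
    ∀ᵐ w ∂shiftMeasure G s, Set.InjOn (treeWeight G w) {T | IsSpanningTree G T} := by
  have h (T T' : Finset (Sym2 V)) : ∀ᵐ w ∂shiftMeasure G s, IsSpanningTree G T →
      IsSpanningTree G T' → treeWeight G w T = treeWeight G w T' → T = T' := by
    by_cases hne : IsSpanningTree G T ∧ IsSpanningTree G T' ∧ T ≠ T'
    · filter_upwards [ae_treeWeight_ne hne.1.1 hne.2.1.1 hne.2.2] with w hw _ _ h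
      exact absurd h hw
    · exact .of_forall fun w hT hT' _ => by_contra fun h => hne ⟨hT, hT', h⟩
  filter_upwards [ae_all_iff.2 fun T => ae_all_iff.2 (h T)] with w hw T hT T' hT' heq
  exact hw T T' hT hT' heq

lemma exists_shiftMeasure_mstEvent_ne_zero (hG : G.Connected) :
    ∃ T, IsSpanningTree G T ∧ shiftMeasure G s (mstEvent G T) ≠ 0 := by
  by_contra! h
  have hnull : ∀ᵐ w ∂shiftMeasure G s, ∀ T, w ∉ mstEvent G T := by
    refine ae_all_iff.2 fun T => measure_eq_zero_iff_ae_notMem.1 ?_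
    by_cases hT : IsSpanningTree G T
    · exact h T hT
    · simp [mstEvent, hT]
  obtain ⟨w, hinj, hw⟩ := (ae_injOn_treeWeight.and hnull).exists
  obtain ⟨T, hT⟩ := exists_mem_mstEvent hG hinj
  exact hw T hT

lemma shiftMeasure_lt_of_swap {e f : G.edgeSet} (hs : s e ≤ s f) {A B U : Set (G.edgeSet → ℝ)}
    (hA : ∀ w ∈ A, w f ≤ w e) (hAB : ∀ w ∈ A, w ∘ Equiv.swap e f ∈ B)
    (hU : IsOpen U) (hUB : U ⊆ B) (hUA : ∀ w ∈ U, w ∘ Equiv.swap e f ∉ A)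
    (hUne : (U ∩ Set.univ.pi fun x => Set.Ioo (s x) (s x + 1)).Nonempty) :
    shiftMeasure G s A < shiftMeasure G s B := by
  set U' := U ∩ Set.univ.pi fun x => Set.Ioo (s x) (s x + 1)
  set A' := (fun w => w ∘ Equiv.swap e f) ⁻¹' (A ∩ Set.Icc s (s + 1)) with hA'
  have hU' : IsOpen U' := hU.inter (isOpen_set_pi Set.finite_univ fun _ _ => isOpen_Ioo)
  have hA'B : A' ⊆ B ∩ Set.Icc s (s + 1) := by
    intro w hw
    have hww : (w ∘ Equiv.swap e f) ∘ Equiv.swap e f = w := by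
      funext x
      simp
    exact hww ▸ ⟨hAB _ hw.1, comp_swap_mem_Icc hs hw.2 (hA _ hw.1)⟩
  have hU'B : U' ⊆ B ∩ Set.Icc s (s + 1) := fun w hw =>
    ⟨hUB hw.1, fun x => (hw.2 x trivial).1.le, fun x => (hw.2 x trivial).2.le⟩
  have hdisj : Disjoint A' U' :=
    Set.disjoint_left.2 fun w hwA hwU => hUA w hwU.1 hwA.1
  have hvol : volume A' = shiftMeasure G s A := by
    rw [hA', volume_preimage_comp_perm, shiftMeasure_eq_restrict,
      Measure.restrict_apply' measurableSet_Icc]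
  calc shiftMeasure G s A = volume A' := hvol.symm
    _ < volume A' + volume U' :=
      ENNReal.lt_add_right (hvol ▸ measure_ne_top _ _) (hU'.measure_pos _ hUne).ne'
    _ = volume (A' ∪ U') := (measure_union hdisj hU'.measurableSet).symm
    _ ≤ volume (B ∩ Set.Icc s (s + 1)) := measure_mono (Set.union_subset hA'B hU'B)
    _ = shiftMeasure G s B := by
      rw [shiftMeasure_eq_restrict, Measure.restrict_apply' measurableSet_Icc]

end ShiftMeasure

section StarAndBroom

/-- The edge of the complete graph joining two distinct vertices, as an index for edge weights. -/
def topEdge {a b : V} (h : a ≠ b) : (⊤ : SimpleGraph V).edgeSet := ⟨s(a, b), h⟩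

lemma topEdge_comm {a b : V} (h : a ≠ b) : topEdge h = topEdge h.symm :=
  Subtype.ext Sym2.eq_swap

lemma exists_topEdge_eq (e : (⊤ : SimpleGraph V).edgeSet) {a : V} (ha : a ∈ (e : Sym2 V)) :
    ∃ b, ∃ h : a ≠ b, topEdge h = e := by
  obtain ⟨⟨e, he⟩, b, rfl⟩ := e, ha
  exact ⟨b, he, rfl⟩

variable [Fintype V]

/-- The edge set of the star in the complete graph with centre `c`. -/
def starTree (c : V) : Finset (Sym2 V) := (starGraph c).edgeFinset

/-- The star with centre `c` in which the leaf `b` is reattached to the leaf `d`: a broom with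
handle `b - d - c`. -/
def broomTree (c b d : V) : Finset (Sym2 V) := insert s(b, d) ((starTree c).erase s(b, c))

variable {a b c d x y : V} {w : (⊤ : SimpleGraph V).edgeSet → ℝ}

lemma mem_starTree : s(x, y) ∈ starTree c ↔ x ≠ y ∧ (x = c ∨ y = c) := by
  simp [starTree]

lemma mem_broomTree : s(x, y) ∈ broomTree c b d ↔
    s(x, y) = s(b, d) ∨ s(x, y) ≠ s(b, c) ∧ x ≠ y ∧ (x = c ∨ y = c) := by
  simp [broomTree, mem_starTree]

lemma isSpanningTree_starTree (c : V) : IsSpanningTree ⊤ (starTree c) :=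
  isSpanningTree_edgeFinset (isTree_starGraph c) le_top

lemma isSpanningTree_broomTree (hbc : b ≠ c) (hbd : b ≠ d) (hdc : d ≠ c) :
    IsSpanningTree ⊤ (broomTree c b d) := by
  have hmem : s(b, d) ∉ starTree c := by grind [mem_starTree]
  refine (isSpanningTree_starTree c).insert_erase (mem_starTree.2 ⟨hbc, .inr rfl⟩) hbd hmem ?_
  have hb : (spanGraph (broomTree c b d)).Adj b d := by
    grind [spanGraph_adj, mem_broomTree]
  have hd : (spanGraph (broomTree c b d)).Adj d c := by
    grind [spanGraph_adj, mem_broomTree]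
  exact hb.reachable.trans hd.reachable

lemma lt_of_mem_mstEvent_starTree (hw : w ∈ mstEvent ⊤ (starTree c)) (hxc : x ≠ c) (hyc : y ≠ c)
    (hxy : x ≠ y) : w (topEdge hxc) < w (topEdge hxy) := by
  refine lt_of_mem_mstEvent hw hxc (f := topEdge hxy) (by grind [mem_starTree])
    (by grind [mem_starTree, topEdge]) ?_
  set H := spanGraph (insert ↑(topEdge hxy) ((starTree c).erase s(x, c)))
  have hx : H.Adj x y := by grind [spanGraph_adj, mem_starTree, topEdge]
  have hy : H.Adj y c := by grind [spanGraph_adj, mem_starTree, topEdge]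
  exact hx.reachable.trans hy.reachable

lemma lt_of_mem_mstEvent_broomTree_handle (hw : w ∈ mstEvent ⊤ (broomTree c b d)) (hbc : b ≠ c)
    (hbd : b ≠ d) (hdc : d ≠ c) (hbx : b ≠ x) (hxd : x ≠ d) :
    w (topEdge hbd) < w (topEdge hbx) := by
  refine lt_of_mem_mstEvent hw hbd (f := topEdge hbx) (by grind [mem_broomTree])
    (by grind [mem_broomTree, topEdge]) ?_
  set H := spanGraph (insert ↑(topEdge hbx) ((broomTree c b d).erase s(b, d)))
  have hb : H.Adj b x := by grind [spanGraph_adj, topEdge]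
  have hd : H.Adj c d := by grind [spanGraph_adj, mem_broomTree, topEdge]
  rcases eq_or_ne x c with rfl | hxc
  · exact hb.reachable.trans hd.reachable
  · have hx : H.Adj x c := by grind [spanGraph_adj, mem_broomTree, topEdge]
    exact hb.reachable.trans (hx.reachable.trans hd.reachable)

lemma lt_of_mem_mstEvent_broomTree_stem (hw : w ∈ mstEvent ⊤ (broomTree c b d)) (hbc : b ≠ c)
    (hbd : b ≠ d) (hdc : d ≠ c) (hbx : b ≠ x) (hxd : x ≠ d) :
    w (topEdge hdc) < w (topEdge hbx) := by
  refine lt_of_mem_mstEvent hw hdc (f := topEdge hbx) (by grind [mem_broomTree])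
    (by grind [mem_broomTree, topEdge]) ?_
  set H := spanGraph (insert ↑(topEdge hbx) ((broomTree c b d).erase s(d, c)))
  have hd : H.Adj d b := by grind [spanGraph_adj, mem_broomTree, topEdge]
  have hb : H.Adj b x := by grind [spanGraph_adj, topEdge]
  rcases eq_or_ne x c with rfl | hxc
  · exact hd.reachable.trans hb.reachable
  · have hx : H.Adj x c := by grind [spanGraph_adj, mem_broomTree, topEdge]
    exact hd.reachable.trans (hb.reachable.trans hx.reachable)

lemma lt_of_mem_mstEvent_broomTree_leaf (hw : w ∈ mstEvent ⊤ (broomTree c b d)) (hbd : b ≠ d)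
    (hdc : d ≠ c) (hxc : x ≠ c) (hxb : x ≠ b) (hyc : y ≠ c) (hxy : x ≠ y)
    (hne : s(x, y) ≠ s(b, d)) : w (topEdge hxc) < w (topEdge hxy) := by
  refine lt_of_mem_mstEvent hw hxc (f := topEdge hxy) (by grind [mem_broomTree])
    (by grind [mem_broomTree, topEdge]) ?_
  set H := spanGraph (insert ↑(topEdge hxy) ((broomTree c b d).erase s(x, c)))
  have hx : H.Adj x y := by grind [spanGraph_adj, topEdge]
  rcases eq_or_ne y b with rfl | hyb
  · have hy : H.Adj y d := by grind [spanGraph_adj, mem_broomTree, topEdge]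
    have hd : H.Adj d c := by grind [spanGraph_adj, mem_broomTree, topEdge]
    exact hx.reachable.trans (hy.reachable.trans hd.reachable)
  · have hy : H.Adj y c := by grind [spanGraph_adj, mem_broomTree, topEdge]
    exact hx.reachable.trans hy.reachable

lemma exists_notMem_of_ne_starTree {T : Finset (Sym2 V)} (hT : IsSpanningTree ⊤ T)
    (hne : T ≠ starTree c) : ∃ x ≠ c, s(x, c) ∉ T := by
  by_contra! h
  have hsub : starTree c ⊆ T := by
    intro e he
    induction e with | _ x y
    obtain ⟨hxy, rfl | rfl⟩ := mem_starTree.1 he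
    · exact Sym2.eq_swap ▸ h y hxy.symm
    · exact h x hxy
  have hcard := (isSpanningTree_iff_connected_and_card.1 hT).2.2
  have hcard_star := (isSpanningTree_iff_connected_and_card.1 (isSpanningTree_starTree c)).2.2
  exact hne (Finset.eq_of_subset_of_card_le hsub (by lia)).symm

lemma mem_mstEvent_starTree
    (h : ∀ x y (hxc : x ≠ c) (hxy : x ≠ y), y ≠ c → w (topEdge hxc) < w (topEdge hxy)) :
    w ∈ mstEvent ⊤ (starTree c) := by
  refine mem_mstEvent_of_forall_exists_lt (isSpanningTree_starTree c) fun T hT hne => ?_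
  obtain ⟨x, hxc, hx⟩ := exists_notMem_of_ne_starTree hT hne
  obtain ⟨y, hyc, hmem, hT'⟩ := hT.exists_insert_erase hxc hx
  have hxy : x ≠ y := hT.1 hmem
  have hsum : w (topEdge hxy) + treeWeight ⊤ w (insert s(x, c) (T.erase s(x, y))) =
      w (topEdge hxc) + treeWeight ⊤ w T :=
    treeWeight_insert_erase (e := topEdge hxy) (f := topEdge hxc) hmem hx
  exact ⟨_, hT', by linarith [h x y hxc hxy hyc]⟩

lemma comp_swap_mem_mstEvent_starTree (hw : w ∈ mstEvent ⊤ (broomTree c b d)) (hbc : b ≠ c)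
    (hbd : b ≠ d) (hdc : d ≠ c) :
    w ∘ Equiv.swap (topEdge hbc) (topEdge hbd) ∈ mstEvent ⊤ (starTree c) := by
  refine mem_mstEvent_starTree fun x y hxc hxy hyc => ?_
  have hxy_bc : topEdge hxy ≠ topEdge hbc := by grind [topEdge]
  rcases eq_or_ne x b with rfl | hxb
  · rcases eq_or_ne y d with rfl | hyd
    · simpa using lt_of_mem_mstEvent_broomTree_handle hw hbc hbd hdc hbc hdc.symm
    · have hxy_bd : topEdge hxy ≠ topEdge hbd := by grind [topEdge]
      simpa [Equiv.swap_apply_of_ne_of_ne hxy_bc hxy_bd] using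
        lt_of_mem_mstEvent_broomTree_handle hw hbc hbd hdc hxy hyd
  · have hxc_bc : topEdge hxc ≠ topEdge hbc := by grind [topEdge]
    have hxc_bd : topEdge hxc ≠ topEdge hbd := by grind [topEdge]
    rw [Function.comp_apply, Function.comp_apply, Equiv.swap_apply_of_ne_of_ne hxc_bc hxc_bd]
    by_cases hbd_eq : s(x, y) = s(b, d)
    · obtain ⟨rfl, rfl⟩ : x = d ∧ y = b := by grind
      simpa [topEdge_comm hxy] using
        lt_of_mem_mstEvent_broomTree_stem hw hbc hbd hdc hbc hdc.symm
    · have hxy_bd : topEdge hxy ≠ topEdge hbd := by grind [topEdge]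
      rw [Equiv.swap_apply_of_ne_of_ne hxy_bc hxy_bd]
      exact lt_of_mem_mstEvent_broomTree_leaf hw hbd hdc hxc hxb hyc hxy hbd_eq

variable {s : (⊤ : SimpleGraph V).edgeSet → ℝ}

lemma exists_mem_mstEvent_starTree_lt (hs : ∀ e f, s e < s f + 1) (hba : b ≠ a) (had : a ≠ d)
    (hbd : b ≠ d) (hdc : d ≠ c) :
    ∃ w ∈ mstEvent ⊤ (starTree c), w (topEdge hba) < w (topEdge hdc) ∧
      w ∈ Set.univ.pi fun e => Set.Ioo (s e) (s e + 1) := by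
  let level (e : (⊤ : SimpleGraph V).edgeSet) : ℝ :=
    if e = topEdge hdc then 2 else if e = topEdge hba then 1 else if c ∈ (e : Sym2 V) then 0 else 3
  obtain ⟨w, hw, hlt⟩ := exists_mem_pi_Ioo_of_overlap hs level
  refine ⟨w, mem_mstEvent_starTree fun x y hxc hxy hyc => hlt _ _ ?_, hlt _ _ ?_, hw⟩
  · grind [topEdge]
  · grind [topEdge]

lemma shiftMeasure_broomTree_lt_starTree (hs : ∀ e f, s e < s f + 1) (hba : b ≠ a) (hac : a ≠ c)
    (had : a ≠ d) (hbc : b ≠ c) (hbd : b ≠ d) (hdc : d ≠ c)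
    (hle : s (topEdge hbc) ≤ s (topEdge hbd)) :
    shiftMeasure ⊤ s (mstEvent ⊤ (broomTree c b d)) <
      shiftMeasure ⊤ s (mstEvent ⊤ (starTree c)) := by
  have swap_ba : Equiv.swap (topEdge hbc) (topEdge hbd) (topEdge hba) = topEdge hba :=
    Equiv.swap_apply_of_ne_of_ne (by grind [topEdge]) (by grind [topEdge])
  have swap_dc : Equiv.swap (topEdge hbc) (topEdge hbd) (topEdge hdc) = topEdge hdc :=
    Equiv.swap_apply_of_ne_of_ne (by grind [topEdge]) (by grind [topEdge])
  refine shiftMeasure_lt_of_swap hle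
    (U := mstEvent ⊤ (starTree c) ∩ {w | w (topEdge hba) < w (topEdge hdc)})
    (fun w hw => (lt_of_mem_mstEvent_broomTree_handle hw hbc hbd hdc hbc hdc.symm).le)
    (fun w hw => comp_swap_mem_mstEvent_starTree hw hbc hbd hdc)
    (isOpen_mstEvent.inter (isOpen_lt (continuous_apply _) (continuous_apply _)))
    Set.inter_subset_left (fun w hw hw' => ?_) ?_
  · have hlt := lt_of_mem_mstEvent_broomTree_stem hw' hbc hbd hdc hba had
    rw [Function.comp_apply, Function.comp_apply, swap_ba, swap_dc] at hlt
    exact hlt.not_gt hw.2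
  · obtain ⟨w, hw, hlt, hwIoo⟩ := exists_mem_mstEvent_starTree_lt hs hba had hbd hdc
    exact ⟨w, ⟨hw, hlt⟩, hwIoo⟩

lemma lt_add_one_of_forall_shiftMeasure_ne_zero
    (h : ∀ T, IsSpanningTree ⊤ T → shiftMeasure ⊤ s (mstEvent ⊤ T) ≠ 0)
    (e f : (⊤ : SimpleGraph V).edgeSet) : s e < s f + 1 := by
  suffices e ≠ f → ∃ T, IsSpanningTree ⊤ T ∧ ∀ w ∈ mstEvent ⊤ T, w e < w f by
    rcases eq_or_ne e f with rfl | hef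
    · exact lt_add_one _
    obtain ⟨T, hT, hlt⟩ := this hef
    obtain ⟨w, hwT, hw⟩ := exists_mem_Icc_of_shiftMeasure_ne_zero (h T hT)
    exact (hw.1 e).trans_lt ((hlt w hwT).trans_le (hw.2 f))
  intro hef
  obtain ⟨c, hce, hcf⟩ : ∃ c ∈ (e : Sym2 V), c ∉ (f : Sym2 V) := by
    by_contra! hsub
    obtain ⟨⟨x, y⟩, hxy : x ≠ y⟩ := e
    refine hef (Subtype.ext ((Sym2.mem_and_mem_iff hxy).1 ⟨hsub x ?_, hsub y ?_⟩).symm)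
    exacts [Sym2.mem_mk_left x y, Sym2.mem_mk_right x y]
  obtain ⟨x, hcx, rfl⟩ := exists_topEdge_eq e hce
  rw [topEdge_comm]
  by_cases hxf : x ∈ (f : Sym2 V)
  · obtain ⟨y, hxy, rfl⟩ := exists_topEdge_eq f hxf
    exact ⟨starTree c, isSpanningTree_starTree c, fun w hw =>
      lt_of_mem_mstEvent_starTree hw hcx.symm (by grind [topEdge]) hxy⟩
  · obtain ⟨u, hu⟩ : ∃ u, u ∈ (f : Sym2 V) := ⟨_, Sym2.out_fst_mem _⟩
    obtain ⟨v, huv, rfl⟩ := exists_topEdge_eq f hu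
    have huc : u ≠ c := ne_of_mem_of_not_mem hu hcf
    have hux : u ≠ x := ne_of_mem_of_not_mem hu hxf
    exact ⟨broomTree c u x, isSpanningTree_broomTree huc hux hcx.symm, fun w hw =>
      lt_of_mem_mstEvent_broomTree_stem hw huc hux hcx.symm huv (by grind [topEdge])⟩

end StarAndBroom

theorem shifts_do_not_suffice_general [Fintype V] (hV : 4 ≤ Fintype.card V)
    (s : (⊤ : SimpleGraph V).edgeSet → ℝ) :
    ∃ T T' : Finset (Sym2 V), IsSpanningTree ⊤ T ∧ IsSpanningTree ⊤ T' ∧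
      shiftedMstProb ⊤ s T ≠ shiftedMstProb ⊤ s T' := by
  obtain ⟨a, -, b, -, c, -, d, -, hab, hac, had, hbc, hbd, hcd⟩ :=
    Finset.three_lt_card.1 (Nat.lt_of_succ_le hV)
  by_contra! h
  have uniform {T T'} (hT : IsSpanningTree ⊤ T) (hT' : IsSpanningTree ⊤ T') :
      shiftMeasure ⊤ s (mstEvent ⊤ T) = shiftMeasure ⊤ s (mstEvent ⊤ T') :=
    (ENNReal.toReal_eq_toReal_iff' (measure_ne_top _ _) (measure_ne_top _ _)).1 (h T T' hT hT')
  have : Nonempty V := ⟨a⟩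
  obtain ⟨T₀, hT₀, hpos⟩ := exists_shiftMeasure_mstEvent_ne_zero (s := s) connected_top
  have hs := lt_add_one_of_forall_shiftMeasure_ne_zero fun T hT => uniform hT hT₀ ▸ hpos
  rcases le_total (s (topEdge hbc)) (s (topEdge hbd)) with hle | hle
  · exact (shiftMeasure_broomTree_lt_starTree hs hab.symm hac had hbc hbd hcd.symm hle).ne
      (uniform (isSpanningTree_broomTree hbc hbd hcd.symm) (isSpanningTree_starTree c))
  · exact (shiftMeasure_broomTree_lt_starTree hs hab.symm had hac hbd hbc hcd hle).ne
      (uniform (isSpanningTree_broomTree hbd hbc hcd) (isSpanningTree_starTree d))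

/-- Shifts do not suffice: for `n ≥ 4` and every shift vector `s` on the edges of `K_n`,
the shifted-interval MST distribution `M_s` on spanning trees of `K_n` is not uniform. -/
theorem shifts_do_not_suffice (n : ℕ) (hn : 4 ≤ n)
    (s : (⊤ : SimpleGraph (Fin n)).edgeSet → ℝ) :
    ∃ T T' : Finset (Sym2 (Fin n)),
      IsSpanningTree (⊤ : SimpleGraph (Fin n)) T ∧
      IsSpanningTree (⊤ : SimpleGraph (Fin n)) T' ∧
      shiftedMstProb (⊤ : SimpleGraph (Fin n)) s T ≠
        shiftedMstProb (⊤ : SimpleGraph (Fin n)) s T' :=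
  shifts_do_not_suffice_general (by simpa using hn) s

end RST
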